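/- Let M be a topological space. For every quasipoint B of the lattice T(M) of open subsets of M, the set B^r := {int(cl(U)) : U ∈ B} is a quasipoint of the lattice T_r(M) of regular open subsets of M, every quasipoint of T_r(M) is contained in exactly one quasipoint of T(M), and the map ρ : B ↦ B^r is a bijection from the set of quasipoints of T(M) onto the set of quasipoints of T_r(M) which is a homeomorphism between the Stone spectrum of T(M) and the Stone spectrum of T_r(M); explicitly, ρ(Q_U(T(M))) = Q_{int(cl(U))}(T_r(M)) for every open U and ρ^{-1}(Q_W(T_r(M))) = Q_W(T(M)) for every regular open W. -/

import Mathlib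

/-- A filter base in an ordered set `L` with least element `⊥`:
a nonempty subset not containing `⊥` in which any two elements have a common lower bound. -/
def IsFilterBase {L : Type*} [PartialOrder L] [OrderBot L] (B : Set L) : Prop :=
  B.Nonempty ∧ ⊥ ∉ B ∧ ∀ a ∈ B, ∀ b ∈ B, ∃ c ∈ B, c ≤ a ∧ c ≤ b

/-- A quasipoint is a maximal filter base. -/
def IsQuasipoint {L : Type*} [PartialOrder L] [OrderBot L] (B : Set L) : Prop :=
  IsFilterBase B ∧ ∀ C : Set L, IsFilterBase C → B ⊆ C → C = B

/-- The set of quasipoints of `L`. -/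
def Quasipoint (L : Type*) [PartialOrder L] [OrderBot L] : Type _ :=
  {B : Set L // IsQuasipoint B}

/-- The basic (cl)open set of the Stone spectrum determined by `a : L`. -/
def Qset {L : Type*} [PartialOrder L] [OrderBot L] (a : L) : Set (Quasipoint L) :=
  {B | a ∈ B.1}

/-- The Stone topology on the set of quasipoints, generated by the sets `Qset a`. -/
instance {L : Type*} [PartialOrder L] [OrderBot L] : TopologicalSpace (Quasipoint L) :=
  TopologicalSpace.generateFrom (Set.range (Qset : L → Set (Quasipoint L)))

open TopologicalSpace

/-- The lattice of regular open subsets of `M` (ordered by inclusion). -/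
def RegOpens (M : Type*) [TopologicalSpace M] : Type _ :=
  {U : Opens M // (U : Set M) = interior (closure (U : Set M))}

instance {M : Type*} [TopologicalSpace M] : PartialOrder (RegOpens M) :=
  inferInstanceAs (PartialOrder {U : Opens M // (U : Set M) = interior (closure (U : Set M))})

instance {M : Type*} [TopologicalSpace M] : OrderBot (RegOpens M) where
  bot := ⟨⊥, by simp⟩
  bot_le U := show (⊥ : Opens M) ≤ U.1 from bot_le

private theorem interior_closure_regular {M : Type*} [TopologicalSpace M] (s : Set M) :
    interior (closure (interior (closure s))) = interior (closure s) := by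
  refine le_antisymm (interior_mono ?_) (interior_maximal subset_closure isOpen_interior)
  simpa using closure_mono (interior_subset : interior (closure s) ⊆ closure s)

/-- The regularization `U ↦ int (cl U)` of an open set, as a regular open set. -/
def regOpen {M : Type*} [TopologicalSpace M] (U : Opens M) : RegOpens M :=
  ⟨⟨interior (closure (U : Set M)), isOpen_interior⟩,
    (interior_closure_regular (U : Set M)).symm⟩

theorem fb_inf_ne {L : Type*} [SemilatticeInf L] [OrderBot L] {B : Set L}
    (hB : IsFilterBase B) {a b : L} (ha : a ∈ B) (hb : b ∈ B) : a ⊓ b ≠ ⊥ := by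
  intro h
  obtain ⟨c, hc, h1, h2⟩ := hB.2.2 a ha b hb
  have : c = ⊥ := le_bot_iff.1 (h ▸ le_inf h1 h2)
  exact hB.2.1 (this ▸ hc)

theorem qp_mem {L : Type*} [SemilatticeInf L] [OrderBot L] {B : Set L}
    (hB : IsQuasipoint B) {a : L} (h : ∀ b ∈ B, a ⊓ b ≠ ⊥) : a ∈ B := by
  have hC : IsFilterBase {w : L | ∃ v ∈ B, a ⊓ v ≤ w} := by
    refine ⟨?_, ?_, ?_⟩
    · obtain ⟨b, hb⟩ := hB.1.1
      exact ⟨b, b, hb, inf_le_right⟩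
    · rintro ⟨v, hv, hle⟩
      exact h v hv (le_bot_iff.1 hle)
    · rintro x ⟨v, hv, hx⟩ y ⟨w, hw, hy⟩
      obtain ⟨c, hc, h1, h2⟩ := hB.1.2.2 v hv w hw
      exact ⟨a ⊓ c, ⟨c, hc, le_rfl⟩, (inf_le_inf_left a h1).trans hx,
        (inf_le_inf_left a h2).trans hy⟩
  have := hB.2 _ hC (fun b hb => ⟨b, hb, inf_le_right⟩)
  rw [← this]
  obtain ⟨b, hb⟩ := hB.1.1
  exact ⟨b, hb, inf_le_left⟩

theorem qp_up {L : Type*} [SemilatticeInf L] [OrderBot L] {B : Set L}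
    (hB : IsQuasipoint B) {a b : L} (ha : a ∈ B) (h : a ≤ b) : b ∈ B :=
  qp_mem hB fun _ hc h0 => fb_inf_ne hB.1 ha hc (le_bot_iff.1 (h0 ▸ inf_le_inf_right _ h))

theorem qp_inf {L : Type*} [SemilatticeInf L] [OrderBot L] {B : Set L}
    (hB : IsQuasipoint B) {a b : L} (ha : a ∈ B) (hb : b ∈ B) : a ⊓ b ∈ B := by
  obtain ⟨c, hc, h1, h2⟩ := hB.1.2.2 a ha b hb
  exact qp_up hB hc (le_inf h1 h2)

instance regOpensInf {M : Type*} [TopologicalSpace M] : SemilatticeInf (RegOpens M) where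
  inf U V := ⟨U.1 ⊓ V.1, by
    refine subset_antisymm (interior_maximal subset_closure (U.1 ⊓ V.1).2) ?_
    refine Set.subset_inter ?_ ?_
    · conv_rhs => rw [U.2]
      exact interior_mono (closure_mono Set.inter_subset_left)
    · conv_rhs => rw [V.2]
      exact interior_mono (closure_mono Set.inter_subset_right)⟩
  inf_le_left U V := show U.1 ⊓ V.1 ≤ U.1 from inf_le_left
  inf_le_right U V := show U.1 ⊓ V.1 ≤ V.1 from inf_le_right
  le_inf U V W h1 h2 := show U.1 ≤ V.1 ⊓ W.1 from le_inf h1 h2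

theorem reg_inf_val {M : Type*} [TopologicalSpace M] (U V : RegOpens M) :
    (U ⊓ V).1 = U.1 ⊓ V.1 := rfl

theorem reg_eq_bot {M : Type*} [TopologicalSpace M] (U : RegOpens M) :
    U = ⊥ ↔ U.1 = ⊥ := ⟨fun h => h ▸ rfl, fun h => Subtype.ext h⟩

theorem regOpen_val {M : Type*} [TopologicalSpace M] (W : RegOpens M) :
    regOpen W.1 = W := Subtype.ext (Opens.ext W.2.symm)

theorem le_regOpen {M : Type*} [TopologicalSpace M] (U : Opens M) : U ≤ (regOpen U).1 :=
  interior_maximal subset_closure U.2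

theorem regOpen_inf {M : Type*} [TopologicalSpace M] (U V : Opens M) :
    (regOpen U).1 ⊓ V = ⊥ ↔ U ⊓ V = ⊥ := by
  constructor
  · intro h
    exact le_bot_iff.1 (h ▸ inf_le_inf_right V (le_regOpen U))
  · intro h
    have h1 : Disjoint (U : Set M) (V : Set M) := by
      rw [Set.disjoint_iff_inter_eq_empty, ← Opens.coe_inf, h]; rfl
    have h2 := (h1.closure_left V.2).mono_left interior_subset
    apply Opens.ext
    exact Set.disjoint_iff_inter_eq_empty.1 h2

theorem qp_reg_iff {M : Type*} [TopologicalSpace M] {B : Set (Opens M)}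
    (hB : IsQuasipoint B) (U : Opens M) : (regOpen U).1 ∈ B ↔ U ∈ B :=
  ⟨fun h => qp_mem hB fun V hV h0 => fb_inf_ne hB.1 h hV ((regOpen_inf U V).2 h0),
    fun h => qp_up hB h (le_regOpen U)⟩

theorem image_eq {M : Type*} [TopologicalSpace M] {B : Set (Opens M)}
    (hB : IsQuasipoint B) : regOpen '' B = {W : RegOpens M | W.1 ∈ B} := by
  ext W
  constructor
  · rintro ⟨U, hU, rfl⟩
    exact (qp_reg_iff hB U).2 hU
  · intro h
    exact ⟨W.1, h, regOpen_val W⟩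

theorem image_qp {M : Type*} [TopologicalSpace M] {B : Set (Opens M)}
    (hB : IsQuasipoint B) : IsQuasipoint (regOpen '' B) := by
  rw [image_eq hB]
  refine ⟨⟨?_, hB.1.2.1, ?_⟩, ?_⟩
  · obtain ⟨b, hb⟩ := hB.1.1
    exact ⟨regOpen b, (qp_reg_iff hB b).2 hb⟩
  · intro a ha b hb
    exact ⟨a ⊓ b, qp_inf hB ha hb, inf_le_left, inf_le_right⟩
  · intro C hC hsub
    refine subset_antisymm ?_ hsub
    intro W hW
    refine qp_mem hB fun V hV h0 => ?_
    refine fb_inf_ne hC (hsub ((qp_reg_iff hB V).2 hV)) hW ?_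
    rw [reg_eq_bot, reg_inf_val, regOpen_inf, inf_comm, h0]

theorem preimage_qp {M : Type*} [TopologicalSpace M] {R : Set (RegOpens M)}
    (hR : IsQuasipoint R) : IsQuasipoint (regOpen ⁻¹' R) := by
  refine ⟨⟨?_, ?_, ?_⟩, ?_⟩
  · obtain ⟨W, hW⟩ := hR.1.1
    exact ⟨W.1, by rwa [Set.mem_preimage, regOpen_val]⟩
  · intro h
    have : regOpen (⊥ : Opens M) = ⊥ := regOpen_val (⊥ : RegOpens M)
    rw [Set.mem_preimage, this] at h
    exact hR.1.2.1 h
  · intro U hU V hV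
    refine ⟨U ⊓ V, qp_mem hR fun W hW h0 => ?_, inf_le_left, inf_le_right⟩
    refine fb_inf_ne hR.1 hU (qp_inf hR hV hW) ?_
    rw [reg_eq_bot, reg_inf_val, regOpen_inf] at h0 ⊢
    rw [reg_inf_val, inf_left_comm, regOpen_inf, inf_left_comm, ← inf_assoc, h0]
  · intro C hC hsub
    refine subset_antisymm ?_ hsub
    intro U hU
    refine qp_mem hR fun W hW h0 => ?_
    rw [reg_eq_bot, reg_inf_val, regOpen_inf] at h0
    exact fb_inf_ne hC hU (hsub (by rwa [Set.mem_preimage, regOpen_val])) h0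

/-- For every quasipoint `B` of the lattice `T(M)` of open sets of `M`, the set
`B^r = {int (cl U) : U ∈ B}` is a quasipoint of the lattice `T_r(M)` of regular open sets;
every quasipoint of `T_r(M)` is contained in exactly one quasipoint of `T(M)`; and
`ρ : B ↦ B^r` is a bijection between the two sets of quasipoints which is a homeomorphism of
the Stone spectra, with `ρ(Q_U(T(M))) = Q_{int (cl U)}(T_r(M))` for every open `U` and
`ρ⁻¹(Q_W(T_r(M))) = Q_W(T(M))` for every regular open `W`. -/
theorem stoneSpectrum_opens_homeo_regOpens {M : Type*} [TopologicalSpace M] :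
    (∀ B : Quasipoint (Opens M), IsQuasipoint (regOpen '' B.1)) ∧
    (∀ R : Quasipoint (RegOpens M),
      ∃! B : Quasipoint (Opens M), (fun W : RegOpens M => W.1) '' R.1 ⊆ B.1) ∧
    ∃ h : Quasipoint (Opens M) ≃ₜ Quasipoint (RegOpens M),
      (∀ B : Quasipoint (Opens M), (h B).1 = regOpen '' B.1) ∧
      (∀ U : Opens M, h '' Qset U = Qset (regOpen U)) ∧
      (∀ W : RegOpens M, h ⁻¹' Qset W = Qset W.1) := by
  have hinv : ∀ B : Quasipoint (Opens M), regOpen ⁻¹' (regOpen '' B.1) = B.1 := by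
    intro B
    rw [image_eq B.2]
    ext U
    exact qp_reg_iff B.2 U
  have hsurj : Function.Surjective (regOpen : Opens M → RegOpens M) :=
    fun W => ⟨W.1, regOpen_val W⟩
  let e : Quasipoint (Opens M) ≃ Quasipoint (RegOpens M) :=
    { toFun := fun B => ⟨regOpen '' B.1, image_qp B.2⟩
      invFun := fun R => ⟨regOpen ⁻¹' R.1, preimage_qp R.2⟩
      left_inv := fun B => Subtype.ext (hinv B)
      right_inv := fun R => Subtype.ext (Set.image_preimage_eq R.1 hsurj) }
  have h1 : ∀ W : RegOpens M, e ⁻¹' Qset W = Qset W.1 := by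
    intro W
    ext B
    change W ∈ regOpen '' B.1 ↔ W.1 ∈ B.1
    rw [image_eq B.2]
    rfl
  have h2 : ∀ U : Opens M, e.symm ⁻¹' Qset U = Qset (regOpen U) := fun U => rfl
  refine ⟨fun B => image_qp B.2, ?_, ⟨e, ?_, ?_⟩, fun B => rfl, ?_, h1⟩
  · intro R
    refine ⟨⟨_, preimage_qp R.2⟩, ?_, ?_⟩
    · rintro _ ⟨W, hW, rfl⟩
      change regOpen W.1 ∈ R.1
      rwa [regOpen_val]
    · intro B hB
      refine Subtype.ext ((preimage_qp R.2).2 _ B.2.1 ?_)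
      intro U hU
      exact (qp_reg_iff B.2 U).1 (hB ⟨_, hU, rfl⟩)
  · refine continuous_generateFrom_iff.2 ?_
    rintro _ ⟨W, rfl⟩
    exact (h1 W) ▸ isOpen_generateFrom_of_mem ⟨W.1, rfl⟩
  · refine continuous_generateFrom_iff.2 ?_
    rintro _ ⟨U, rfl⟩
    exact isOpen_generateFrom_of_mem ⟨regOpen U, rfl⟩
  · intro U
    rw [← h2]
    exact e.image_eq_preimage_symm _
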